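/- arXiv:2111.03373 — 3 statements merged into one kernel-verified Lean document; each statement's English description precedes it below -/
import Mathlib

section
/- Let V and E be finite types forming a connected multigraph: maps ini : E → V and an involution bar : E → E with bar (bar e) = e and bar e ≠ e for every e, terminal vertex ter e := ini (bar e), such that V is nonempty and any two vertices are joined by an edge-chain. Then there exists a closed edge-chain e₁, …, e_N (i.e. ter e_k = ini e_{k+1} for all k < N and ter e_N = ini e₁) such that for every edge e ∈ E there is an index k with e_k = e or e_k = bar e. Equivalently, there is a standard circuit C_N and a surjective morphism of graphs C_N → Γ. -/
/-!
Relate two edges `e` and `f` if `f` starts where `e` ends. Connectedness says that any two edges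
are joined by a nonempty chain for this relation, so one can start at some edge, visit all the
edges of a finite list one after the other, and come back to the start. Each edge is met in its
own orientation, so this is really a fact about strongly connected directed multigraphs.
-/

open Relation

section CyclicChains

variable {α : Type*} {r : α → α → Prop} {a b : α}

theorem exists_isChain_cons_concat_of_transGen (h : TransGen r a b) :
    ∃ l : List α, (a :: (l ++ [b])).IsChain r := by
  induction h with
  | single hab => exact ⟨[], by simpa using hab⟩
  | @tail b c _ hbc ih =>
    obtain ⟨l, hl⟩ := ih
    exact ⟨l ++ [b], by simpa using List.isChain_cons_append_cons_cons.2 ⟨hl, hbc, .singleton c⟩⟩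

theorem exists_isChain_cons_concat_subset (h : ∀ a b, TransGen r a b) (s : List α) (a b : α) :
    ∃ l : List α, (a :: (l ++ [b])).IsChain r ∧ s ⊆ l := by
  induction s generalizing a with
  | nil =>
    obtain ⟨l, hl⟩ := exists_isChain_cons_concat_of_transGen (h a b)
    exact ⟨l, hl, l.nil_subset⟩
  | cons x s ih =>
    obtain ⟨l, hax⟩ := exists_isChain_cons_concat_of_transGen (h a x)
    obtain ⟨m, hxb, hsm⟩ := ih x
    refine ⟨l ++ x :: m, ?_, ?_⟩
    · simpa using List.isChain_cons_split.2 ⟨hax, hxb⟩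
    · exact List.Subset.trans (List.cons_subset_cons x hsm) (List.subset_append_right l _)

theorem exists_cycle_chain_forall_mem [Finite α] (h : ∀ a b, TransGen r a b) :
    ∃ l : List α, Cycle.Chain r l ∧ ∀ a, a ∈ l := by
  obtain ⟨s, hs⟩ := Finite.exists_univ_list α
  obtain _ | ⟨⟨a⟩⟩ := isEmpty_or_nonempty α
  · exact ⟨[], Cycle.Chain.nil r, isEmptyElim⟩
  · obtain ⟨l, hl, hsl⟩ := exists_isChain_cons_concat_subset h s a a
    exact ⟨a :: l, (Cycle.chain_coe_cons r a l).2 hl,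
      fun x => List.mem_cons_of_mem a (hsl (hs.2 x))⟩

theorem rel_get_finRotate_of_cycle_chain {l : List α} (h : Cycle.Chain r l) (k : Fin l.length) :
    r (l.get k) (l.get (finRotate l.length k)) := by
  cases l with
  | nil => exact k.elim0
  | cons a l =>
    rw [Cycle.chain_coe_cons, ← List.cons_append] at h
    have hk := h.getElem k (by simpa using k.is_le)
    rw [List.getElem_append_left k.isLt] at hk
    obtain ⟨i, rfl⟩ | rfl := Fin.eq_castSucc_or_eq_last (n := l.length) k
    · simpa using hk
    · simpa using hk

theorem exists_surjective_forall_rel_finRotate [Finite α] (h : ∀ a b, TransGen r a b) :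
    ∃ (N : ℕ) (c : Fin N → α), c.Surjective ∧ ∀ k, r (c k) (c (finRotate N k)) := by
  obtain ⟨l, hchain, hmem⟩ := exists_cycle_chain_forall_mem h
  exact ⟨l.length, l.get, fun a => List.get_of_mem (hmem a),
    rel_get_finRotate_of_cycle_chain hchain⟩

end CyclicChains

section DirectedMultigraph

variable {V E : Type*} {ini ter : E → V}

theorem transGen_ter_eq_ini_of_reflTransGen {e f : E}
    (h : ReflTransGen (fun a b => ∃ g, ini g = a ∧ ter g = b) (ter e) (ini f)) :
    TransGen (fun e f => ter e = ini f) e f := by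
  generalize hv : ini f = v at h
  induction h generalizing f with
  | refl => exact .single hv.symm
  | tail _ hstep ih =>
    obtain ⟨g, hg, hgv⟩ := hstep
    exact (ih hg).tail (hgv.trans hv.symm)

theorem exists_surjective_closed_edge_chain_general [Finite E]
    (hconn : ∀ u v : V, ReflTransGen (fun a b => ∃ e, ini e = a ∧ ter e = b) u v) :
    ∃ (N : ℕ) (c : Fin N → E),
      c.Surjective ∧ ∀ k : Fin N, ter (c k) = ini (c (finRotate N k)) :=
  exists_surjective_forall_rel_finRotate fun _ _ =>
    transGen_ter_eq_ini_of_reflTransGen (hconn _ _)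

end DirectedMultigraph

/-- Every finite connected (Serre) multigraph receives a surjective morphism from a
standard circuit: there is a closed edge-chain `e₁, …, e_N` (the chain and closedness
conditions are encoded cyclically via `finRotate N`) passing through every edge of the
graph, up to orientation. -/
theorem exists_surjective_closed_edge_chain
    (V E : Type) [Finite V] [Finite E] [Nonempty V]
    (ini : E → V) (bar : E → E)
    (hinv : ∀ e, bar (bar e) = e) (hne : ∀ e, bar e ≠ e)
    (hconn : ∀ u v : V,
      Relation.ReflTransGen (fun a b => ∃ e, ini e = a ∧ ini (bar e) = b) u v) :
    ∃ (N : ℕ) (c : Fin N → E),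
      (∀ k : Fin N, ini (bar (c k)) = ini (c (finRotate N k))) ∧
      ∀ e : E, ∃ k : Fin N, c k = e ∨ c k = bar e := by
  obtain ⟨N, c, hsurj, hclosed⟩ :=
    exists_surjective_closed_edge_chain_general (ter := fun e => ini (bar e)) hconn
  exact ⟨N, c, hclosed, fun e => (hsurj e).imp fun _ => Or.inl⟩
end

section
/- Let Y be a topological space, ι an index type, T : ι → Set Y a family of subsets, V : ι → Type a family of types, and for each i a function φ i defined on T i with values in V i. For (i, x) in the sigma type Σ i, V i, write F(i,x) := {y ∈ Y | y ∈ T i ∧ φ i y = x}. Assume that F(i,x) is a preconnected subset of Y for every i and x. Define a relation R on Σ i, V i by: R (i,x₁) (j,x₂) holds iff there exists y ∈ T i ∩ T j with φ i y = x₁ and φ j y = x₂. Then for every p : Σ i, V i, the union of the sets F(q) over all q with EqvGen R p q is a preconnected subset of Y. -/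
/-!
Fibres whose indices are related by the generating relation intersect, a condition that is symmetric
in the two indices. An equivalence class is therefore a family of preconnected fibres in which any
two are joined by a finite chain, consecutive fibres meeting, and the chain never leaves the class.
-/

open Relation

theorem reflTransGen_and_mem_of_closed {α : Type*} {r : α → α → Prop} {t : Set α}
    (ht : ∀ a b, r a b → a ∈ t → b ∈ t) {a b : α} (ha : a ∈ t) (hab : ReflTransGen r a b) :
    ReflTransGen (fun x y => r x y ∧ x ∈ t) a b := by
  induction hab using ReflTransGen.head_induction_on with
  | refl => exact .refl
  | head hac _ ih => exact .head ⟨hac, ha⟩ (ih (ht _ _ hac ha))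

theorem isPreconnected_biUnion_eqvGen {X ι : Type*} [TopologicalSpace X] {s : ι → Set X}
    {r : ι → ι → Prop} {p : ι} (hs : ∀ i, EqvGen r p i → IsPreconnected (s i))
    (hr : ∀ i j, r i j → (s i ∩ s j).Nonempty) :
    IsPreconnected (⋃ i ∈ {i | EqvGen r p i}, s i) := by
  refine IsPreconnected.biUnion_of_reflTransGen hs fun i hi j hj => ?_
  have closed : ∀ a b, SymmGen r a b → EqvGen r p a → EqvGen r p b := fun a b hab hpa =>
    hpa.trans _ _ _ (EqvGen.symmGen_le_eqvGen r _ _ hab)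
  have chain : ReflTransGen (SymmGen r) i j := by
    rw [EqvGen.reflTransGen_symmGen]
    exact (hi.symm _ _).trans _ _ _ hj
  have meet : ∀ a b, SymmGen r a b → (s a ∩ s b).Nonempty := by
    rintro a b (hab | hba)
    · exact hr a b hab
    · rw [Set.inter_comm]
      exact hr b a hba
  exact ReflTransGen.mono (fun a b => And.imp_left (meet a b)) _ _
    (reflTransGen_and_mem_of_closed closed hi chain)

/-- Pseudofibres are connected: if each fibre `F (i, x) = {y | y ∈ T i ∧ φ i y = x}` is
preconnected, then for any `p` the union of the fibres `F q` over all `q` equivalent to `p`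
under the equivalence relation generated by
`R (i, x₁) (j, x₂) ↔ ∃ y ∈ T i ∩ T j, φ i y = x₁ ∧ φ j y = x₂` is preconnected. -/
theorem isPreconnected_pseudofibre
    {Y : Type*} [TopologicalSpace Y] {ι : Type*}
    (T : ι → Set Y) (V : ι → Type*) (φ : ∀ i, Y → V i)
    (hF : ∀ (i : ι) (x : V i), IsPreconnected {y : Y | y ∈ T i ∧ φ i y = x})
    (p : Σ i, V i) :
    IsPreconnected
      (⋃ q ∈ {q : Σ i, V i |
          Relation.EqvGen (fun a b : Σ i, V i =>
            ∃ y : Y, (y ∈ T a.1 ∧ y ∈ T b.1) ∧ φ a.1 y = a.2 ∧ φ b.1 y = b.2) p q},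
        {y : Y | y ∈ T q.1 ∧ φ q.1 y = q.2}) :=
  isPreconnected_biUnion_eqvGen (fun q _ => hF q.1 q.2)
    fun _ _ ⟨y, ⟨hya, hyb⟩, ha, hb⟩ => ⟨y, ⟨hya, ha⟩, hyb, hb⟩
end

section
/- Let V and E form a connected multigraph (maps ini : E → V, involution bar : E → E with bar (bar e) = e and bar e ≠ e, terminal vertex ter e := ini (bar e), any two vertices joined by an edge-chain), let c : E → ℂˣ be a transition datum, i.e. c (bar e) = (c e)⁻¹ for every e, and let v₀ be a fixed vertex. Then the following are equivalent: (i) the set of holonomies c e₁ ⋯ c e_n over all closed edge-chains with ini e₁ = v₀ (together with 1, the holonomy of the empty chain at v₀) is a finite subset of ℂˣ; (ii) there exist an integer m > 0 and a function s : V → ℂˣ such that s (ter e) = (c e)^m * s (ini e) for every edge e. -/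
/-!
The holonomies of the closed edge-chains at `v₀` form a monoid `H`. A potential for `c ^ m` is
multiplied by `h ^ m` along a chain of holonomy `h`, so it forces `h ^ m = 1` on `H`. Conversely,
if `h ^ m = 1` on `H`, then the `m`-th power of the holonomy of a chain from `v₀` to `v` depends
only on `v`, as one sees by closing the chain up with a fixed chain from `v` back to `v₀`; this
power is the potential. Finally, where the `m`-torsion is finite for every `m > 0`, as in `ℂˣ`,
`H` is finite if and only if some `m > 0` satisfies `h ^ m = 1` on `H`.
-/

section Holonomy

variable {V E M : Type*} {ini ter : E → V}

/-- `HasHolonomy ini ter c u v h`: some edge-chain from `u` to `v`, possibly empty, has holonomy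
`h`. Edges are directed; a Serre multigraph is the case `ter = ini ∘ bar`. -/
inductive HasHolonomy [Monoid M] (ini ter : E → V) (c : E → M) : V → V → M → Prop
  | nil (v : V) : HasHolonomy ini ter c v v 1
  | snoc {u : V} {h : M} (e : E) (hu : HasHolonomy ini ter c u (ini e) h) :
      HasHolonomy ini ter c u (ter e) (h * c e)

namespace HasHolonomy

theorem trans [Monoid M] {c : E → M} {u v w : V} {g h : M} (hg : HasHolonomy ini ter c u v g)
    (hh : HasHolonomy ini ter c v w h) : HasHolonomy ini ter c u w (g * h) := by
  induction hh with
  | nil => rwa [mul_one]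
  | snoc e _ ih =>
    rw [← mul_assoc]
    exact ih.snoc e

theorem exists_of_reflTransGen [Monoid M] (c : E → M) {u v : V}
    (huv : Relation.ReflTransGen (fun a b => ∃ e, ini e = a ∧ ter e = b) u v) :
    ∃ h, HasHolonomy ini ter c u v h := by
  induction huv with
  | refl => exact ⟨1, .nil u⟩
  | tail _ hstep ih =>
    obtain ⟨h, hh⟩ := ih
    obtain ⟨e, rfl, rfl⟩ := hstep
    exact ⟨h * c e, hh.snoc e⟩

end HasHolonomy

/-- The monoid of holonomies of the closed edge-chains based at `v`: the image of the monodromy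
homomorphism, in the case of a transition datum on a Serre multigraph. -/
def holonomyMonoid [Monoid M] (ini ter : E → V) (c : E → M) (v : V) : Submonoid M where
  carrier := {h | HasHolonomy ini ter c v v h}
  one_mem' := .nil v
  mul_mem' := .trans

theorem mem_holonomyMonoid [Monoid M] {c : E → M} {v : V} {h : M} :
    h ∈ holonomyMonoid ini ter c v ↔ HasHolonomy ini ter c v v h :=
  Iff.rfl

end Holonomy

section EdgeChain

variable {V E M : Type*} {ini ter : E → V} {N : ℕ} {u v : V}

/-- A nonempty edge-chain from `u` to `v`, as the finite sequence of its edges. -/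
structure IsEdgeChain (ini ter : E → V) (ch : Fin (N + 1) → E) (u v : V) : Prop where
  ini_zero : ini (ch 0) = u
  ter_castSucc : ∀ k : Fin N, ter (ch k.castSucc) = ini (ch k.succ)
  ter_last : ter (ch (Fin.last N)) = v

namespace IsEdgeChain

theorem single (e : E) : IsEdgeChain ini ter (fun _ : Fin 1 => e) (ini e) (ter e) :=
  ⟨rfl, fun k => k.elim0, rfl⟩

theorem init {ch : Fin (N + 2) → E} (h : IsEdgeChain ini ter ch u v) :
    IsEdgeChain ini ter (Fin.init ch) u (ini (ch (Fin.last (N + 1)))) :=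
  ⟨h.ini_zero, fun k => h.ter_castSucc k.castSucc, h.ter_castSucc (Fin.last N)⟩

theorem snoc {ch : Fin (N + 1) → E} {e : E} (h : IsEdgeChain ini ter ch u (ini e)) :
    IsEdgeChain ini ter (Fin.snoc (α := fun _ => E) ch e) u (ter e) where
  ini_zero := by rw [Fin.snoc_apply_zero, h.ini_zero]
  ter_castSucc k := by
    cases k using Fin.lastCases with
    | last => rw [Fin.snoc_castSucc, Fin.succ_last, Fin.snoc_last, h.ter_last]
    | cast k => rw [Fin.snoc_castSucc, Fin.succ_castSucc, Fin.snoc_castSucc, h.ter_castSucc]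
  ter_last := by rw [Fin.snoc_last]

theorem self_iff {ch : Fin (N + 1) → E} :
    IsEdgeChain ini ter ch v v ↔
      (∀ k, ter (ch k) = ini (ch (finRotate (N + 1) k))) ∧ ini (ch 0) = v := by
  have rotate_castSucc (k : Fin N) : finRotate (N + 1) k.castSucc = k.succ := by simp
  simp only [Fin.forall_fin_succ', finRotate_last, rotate_castSucc]
  exact ⟨fun h => ⟨⟨h.ter_castSucc, h.ter_last.trans h.ini_zero.symm⟩, h.ini_zero⟩,
    fun ⟨⟨hstep, hlast⟩, hzero⟩ => ⟨hzero, hstep, hlast.trans hzero⟩⟩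

theorem hasHolonomy_prod [CommMonoid M] (c : E → M) {ch : Fin (N + 1) → E}
    (h : IsEdgeChain ini ter ch u v) : HasHolonomy ini ter c u v (∏ k, c (ch k)) := by
  induction N generalizing v with
  | zero =>
    obtain ⟨rfl, -, rfl⟩ := h
    simpa using (HasHolonomy.nil (ini (ch 0))).snoc (ch 0)
  | succ N ih =>
    rw [Fin.prod_univ_castSucc, ← h.ter_last]
    exact (ih h.init).snoc _

end IsEdgeChain

theorem hasHolonomy_iff [CommMonoid M] {c : E → M} {h : M} :
    HasHolonomy ini ter c u v h ↔ u = v ∧ h = 1 ∨ ∃ (N : ℕ) (ch : Fin (N + 1) → E),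
      IsEdgeChain ini ter ch u v ∧ ∏ k, c (ch k) = h := by
  constructor
  · intro hh
    induction hh with
    | nil => exact .inl ⟨rfl, rfl⟩
    | snoc e _ ih =>
      obtain ⟨rfl, rfl⟩ | ⟨N, ch, hch, rfl⟩ := ih
      · exact .inr ⟨0, fun _ => e, .single e, by simp⟩
      · exact .inr ⟨N + 1, Fin.snoc ch e, hch.snoc, by simp [Fin.prod_univ_castSucc]⟩
  · rintro (⟨rfl, rfl⟩ | ⟨N, ch, hch, rfl⟩)
    · exact .nil u
    · exact hch.hasHolonomy_prod c

theorem coe_holonomyMonoid [CommMonoid M] (c : E → M) (v : V) :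
    (holonomyMonoid ini ter c v : Set M) =
      insert 1 {h | ∃ (N : ℕ) (ch : Fin (N + 1) → E),
        (∀ k, ter (ch k) = ini (ch (finRotate (N + 1) k))) ∧ ini (ch 0) = v ∧
          ∏ k, c (ch k) = h} := by
  ext h
  simp only [SetLike.mem_coe, mem_holonomyMonoid, hasHolonomy_iff, IsEdgeChain.self_iff, true_and,
    and_assoc, Set.mem_insert_iff, Set.mem_ofPred_eq]

end EdgeChain

section PowPotential

variable {V E M : Type*} {ini ter : E → V} {c : E → M} {m : ℕ}

theorem HasHolonomy.potential_eq_pow_mul [CommMonoid M] {s : V → M}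
    (hs : ∀ e, s (ter e) = c e ^ m * s (ini e)) {u v : V} {h : M}
    (hh : HasHolonomy ini ter c u v h) : s v = h ^ m * s u := by
  induction hh with
  | nil => rw [one_pow, one_mul]
  | snoc e _ ih => rw [hs e, ih, mul_pow, mul_left_comm, mul_assoc]

theorem exists_pow_potential_of_holonomy_pow_eq_one [CommMonoid M] {v₀ : V}
    (hconn : ∀ u v : V, Relation.ReflTransGen (fun a b => ∃ e, ini e = a ∧ ter e = b) u v)
    (hpow : ∀ h ∈ holonomyMonoid ini ter c v₀, h ^ m = 1) :
    ∃ s : V → M, ∀ e, s (ter e) = c e ^ m * s (ini e) := by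
  choose out h_out using fun v => HasHolonomy.exists_of_reflTransGen c (hconn v₀ v)
  choose back h_back using fun v => HasHolonomy.exists_of_reflTransGen c (hconn v v₀)
  have pow_mul_back {v : V} {h : M} (hh : HasHolonomy ini ter c v₀ v h) :
      h ^ m * back v ^ m = 1 := by
    rw [← mul_pow]
    exact hpow _ (mem_holonomyMonoid.mpr (hh.trans (h_back v)))
  have pow_eq {v : V} {g h : M} (hg : HasHolonomy ini ter c v₀ v g)
      (hh : HasHolonomy ini ter c v₀ v h) : g ^ m = h ^ m :=
    left_inv_eq_right_inv (pow_mul_back hg) ((mul_comm _ _).trans (pow_mul_back hh))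
  refine ⟨fun v => out v ^ m, fun e => ?_⟩
  calc out (ter e) ^ m = (out (ini e) * c e) ^ m := pow_eq (h_out _) ((h_out _).snoc e)
    _ = c e ^ m * out (ini e) ^ m := by rw [mul_pow, mul_comm]

theorem exists_pow_potential_iff_holonomy_pow_eq_one [CancelCommMonoid M] (v₀ : V)
    (hconn : ∀ u v : V, Relation.ReflTransGen (fun a b => ∃ e, ini e = a ∧ ter e = b) u v) :
    (∃ s : V → M, ∀ e, s (ter e) = c e ^ m * s (ini e)) ↔
      ∀ h ∈ holonomyMonoid ini ter c v₀, h ^ m = 1 :=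
  ⟨fun ⟨_, hs⟩ _ hh => mul_eq_right.mp ((mem_holonomyMonoid.mp hh).potential_eq_pow_mul hs).symm,
    exists_pow_potential_of_holonomy_pow_eq_one hconn⟩

end PowPotential

section FiniteTorsion

theorem submonoid_finite_iff_exists_pow_eq_one {M : Type*} [LeftCancelMonoid M]
    (htors : ∀ m : ℕ, 0 < m → {a : M | a ^ m = 1}.Finite) (H : Submonoid M) :
    (H : Set M).Finite ↔ ∃ m : ℕ, 0 < m ∧ ∀ h ∈ H, h ^ m = 1 := by
  refine ⟨fun hH => ?_, fun ⟨m, hm, hpow⟩ => (htors m hm).subset hpow⟩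
  have orderOf_pos {h : M} (hh : h ∈ H) : 0 < orderOf h :=
    (finite_powers.mp (hH.subset (Submonoid.powers_le.mpr hh))).orderOf_pos
  refine ⟨∏ h ∈ hH.toFinset, orderOf h,
    Finset.prod_pos fun h hh => orderOf_pos (hH.mem_toFinset.mp hh), fun h hh => ?_⟩
  exact orderOf_dvd_iff_pow_eq_one.mp (Finset.dvd_prod_of_mem orderOf (hH.mem_toFinset.mpr hh))

theorem finite_setOf_units_pow_eq_one {R : Type*} [CommRing R] [IsDomain R] (m : ℕ) (hm : 0 < m) :
    {a : Rˣ | a ^ m = 1}.Finite :=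
  have : NeZero m := ⟨hm.ne'⟩
  (inferInstance : Finite (rootsOfUnity m R))

end FiniteTorsion

theorem holonomy_finite_iff_exists_pow_potential_general {V E M : Type*} [CancelCommMonoid M]
    (htors : ∀ m : ℕ, 0 < m → {a : M | a ^ m = 1}.Finite) (ini ter : E → V)
    (hconn : ∀ u v : V, Relation.ReflTransGen (fun a b => ∃ e, ini e = a ∧ ter e = b) u v)
    (c : E → M) (v₀ : V) :
    (insert 1 {h | ∃ (N : ℕ) (ch : Fin (N + 1) → E),
        (∀ k, ter (ch k) = ini (ch (finRotate (N + 1) k))) ∧ ini (ch 0) = v₀ ∧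
          ∏ k, c (ch k) = h}).Finite ↔
      ∃ m : ℕ, 0 < m ∧ ∃ s : V → M, ∀ e, s (ter e) = c e ^ m * s (ini e) := by
  rw [← coe_holonomyMonoid, submonoid_finite_iff_exists_pow_eq_one htors]
  simp only [exists_pow_potential_iff_holonomy_pow_eq_one v₀ hconn]

/-- On a connected (Serre) multigraph with a transition datum `c : E → ℂˣ`
(`c (bar e) = (c e)⁻¹`) and a base vertex `v₀`, the set of holonomies of closed
edge-chains based at `v₀` (together with `1`, the holonomy of the empty chain) is
finite if and only if there exist `m > 0` and a potential `s : V → ℂˣ` with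
`s (ter e) = (c e) ^ m * s (ini e)` for every edge. Closed edge-chains based at `v₀`
are encoded cyclically via `finRotate (N + 1)` with `ini (ch 0) = v₀`. -/
theorem holonomy_finite_iff_exists_pow_potential
    (V E : Type*) (ini : E → V) (bar : E → E)
    (hinv : ∀ e, bar (bar e) = e) (hne : ∀ e, bar e ≠ e)
    (hconn : ∀ u v : V,
      Relation.ReflTransGen (fun a b => ∃ e, ini e = a ∧ ini (bar e) = b) u v)
    (c : E → ℂˣ) (hc : ∀ e, c (bar e) = (c e)⁻¹) (v₀ : V) :
    (Set.Finite (insert (1 : ℂˣ)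
      {h : ℂˣ | ∃ (N : ℕ) (ch : Fin (N + 1) → E),
        (∀ k : Fin (N + 1), ini (bar (ch k)) = ini (ch (finRotate (N + 1) k))) ∧
        ini (ch 0) = v₀ ∧ ∏ k : Fin (N + 1), c (ch k) = h})) ↔
    ∃ (m : ℕ), 0 < m ∧
      ∃ s : V → ℂˣ, ∀ e : E, s (ini (bar e)) = (c e) ^ m * s (ini e) :=
  holonomy_finite_iff_exists_pow_potential_general finite_setOf_units_pow_eq_one ini (ini ∘ bar)
    hconn c v₀
end
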